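/- arXiv:1912.11614 — 2 statements merged into one kernel-verified Lean document; each statement's English description precedes it below -/
import Mathlib

section
/- The function x ↦ sin⁵(x)/x⁴ is Lebesgue integrable on (0,∞) and ∫_0^∞ sin⁵(x)/x⁴ dx = (125/96)·ln 5 − (45/32)·ln 3. -/
open MeasureTheory Real

open Set Filter Topology in
theorem aux_integrable :
    IntegrableOn (fun x : ℝ => Real.sin x ^ 5 / x ^ 4) (Set.Ioi 0) := by
  have hm : Measurable (fun x : ℝ => Real.sin x ^ 5 / x ^ 4) := by fun_prop
  rw [← Ioc_union_Ioi_eq_Ioi (zero_le_one' ℝ)]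
  refine IntegrableOn.union ?_ ?_
  · refine Measure.integrableOn_of_bounded (M := 1) (by simp) hm.aestronglyMeasurable ?_
    filter_upwards [ae_restrict_mem measurableSet_Ioc] with x hx
    have hx0 : 0 < x := hx.1
    rw [Real.norm_eq_abs, abs_div, abs_pow, abs_pow, abs_of_pos hx0, div_le_one (by positivity)]
    have h1 : |Real.sin x| ≤ x := by
      have := Real.abs_sin_le_abs (x := x)
      rwa [abs_of_pos hx0] at this
    calc |Real.sin x| ^ 5 ≤ x ^ 5 := by gcongr
      _ = x ^ 4 * x := by ring
      _ ≤ x ^ 4 * 1 := by have := hx.2; gcongr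
      _ = x ^ 4 := by ring
  · have hi : IntegrableOn (fun x : ℝ => x ^ (-4 : ℝ)) (Ioi 1) :=
      integrableOn_Ioi_rpow_of_lt (by norm_num) one_pos
    refine Integrable.mono' hi hm.aestronglyMeasurable ?_
    filter_upwards [ae_restrict_mem measurableSet_Ioi] with x hx
    have hx0 : 0 < x := lt_trans one_pos hx
    have e : x ^ (-4 : ℝ) = 1 / x ^ 4 := by
      rw [Real.rpow_neg hx0.le, one_div]
      congr 1
      exact_mod_cast Real.rpow_natCast x 4
    rw [e, Real.norm_eq_abs, abs_div, abs_pow, abs_pow, abs_of_pos hx0]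
    gcongr
    exact pow_le_one₀ (abs_nonneg _) (Real.abs_sin_le_one x)

theorem aux_sin5 (x : ℝ) :
    Real.sin x ^ 5 = (10 * Real.sin x - 5 * Real.sin (3 * x) + Real.sin (5 * x)) / 16 := by
  have h2 : Real.sin (5 * x) = Real.sin (3 * x + 2 * x) := by ring_nf
  rw [h2, Real.sin_add, Real.sin_three_mul, Real.cos_three_mul, Real.sin_two_mul, Real.cos_two_mul]
  have h : Real.cos x ^ 2 = 1 - Real.sin x ^ 2 := Real.cos_sq' x
  have h4 : Real.cos x ^ 4 = (1 - Real.sin x ^ 2) ^ 2 := by rw [← h]; ring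
  ring_nf
  rw [h4, h]
  ring

noncomputable def auxF (y : ℝ) : ℝ := (Real.sin y - y) / y ^ 3

open Set Filter Topology in
theorem auxF_zero : Tendsto auxF (𝓝[>] 0) (𝓝 (-1 / 6)) := by
  rw [tendsto_iff_dist_tendsto_zero]
  have hz : Tendsto (fun x : ℝ => x * (5 / 96)) (𝓝[>] 0) (𝓝 0) := by
    have : Tendsto (fun x : ℝ => x * (5 / 96)) (𝓝 0) (𝓝 (0 * (5 / 96))) :=
      (continuous_id.mul continuous_const).tendsto 0
    rw [zero_mul] at this
    exact this.mono_left nhdsWithin_le_nhds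
  refine squeeze_zero' (Eventually.of_forall fun _ => dist_nonneg) ?_ hz
  filter_upwards [Ioc_mem_nhdsGT (zero_lt_one' ℝ)] with x hx
  have hx0 : 0 < x := hx.1
  have hb := Real.sin_bound (x := x) (by rw [abs_of_pos hx0]; exact hx.2)
  rw [abs_of_pos hx0] at hb
  have e : auxF x - -1 / 6 = (Real.sin x - (x - x ^ 3 / 6)) / x ^ 3 := by
    unfold auxF; field_simp; ring
  rw [Real.dist_eq, e, abs_div, abs_of_pos (pow_pos hx0 3), div_le_iff₀ (by positivity)]
  have h4 : 0 < x ^ 4 := by positivity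
  have h5 : x ^ 5 ≤ x ^ 4 := pow_le_pow_of_le_one hx0.le hx.2 (by norm_num)
  linarith [hb, show x * (5 / 96) * x ^ 3 = x ^ 4 * (5 / 96) by ring]

open Set Filter Topology in
theorem auxF_top : Tendsto auxF atTop (𝓝 0) := by
  have hz : Tendsto (fun x : ℝ => 2 * x⁻¹) atTop (𝓝 0) := by
    simpa using (tendsto_inv_atTop_zero (𝕜 := ℝ)).const_mul 2
  refine squeeze_zero_norm' ?_ hz
  filter_upwards [eventually_ge_atTop 1] with x hx
  have hx0 : 0 < x := by linarith
  unfold auxF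
  rw [Real.norm_eq_abs, abs_div, abs_of_pos (pow_pos hx0 3), div_le_iff₀ (by positivity)]
  have h1 : 2 * x⁻¹ * x ^ 3 = 2 * x ^ 2 := by field_simp
  rw [h1, abs_le]
  have := Real.neg_one_le_sin x
  have := Real.sin_le_one x
  constructor <;> nlinarith

open Set Filter Topology in
theorem auxF_loc : LocallyIntegrableOn auxF (Ioi 0) := by
  refine ContinuousOn.locallyIntegrableOn ?_ measurableSet_Ioi
  unfold auxF
  refine ContinuousOn.div (by fun_prop) (by fun_prop) ?_
  intro x hx
  exact (pow_pos hx 3).ne'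

theorem aux_decomp (x : ℝ) (hx : 0 < x) : Real.sin x ^ 5 / x ^ 4 =
    (10 / 16) * (x⁻¹ • (auxF (1 * x) - auxF (3 * x)))
      - (125 / 16) * (x⁻¹ • (auxF (3 * x) - auxF (5 * x))) := by
  rw [aux_sin5]
  simp only [auxF, smul_eq_mul, one_mul]
  field_simp
  ring

open Set Filter Topology in
theorem stmt_17 :
    IntegrableOn (fun x : ℝ => Real.sin x ^ 5 / x ^ 4) (Set.Ioi 0) ∧
    ∫ x in Set.Ioi (0 : ℝ), Real.sin x ^ 5 / x ^ 4 =
      125 / 96 * Real.log 5 - 45 / 32 * Real.log 3 := by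
  refine ⟨aux_integrable, ?_⟩
  have hp : Tendsto (fun t : ℝ => (t⁻¹, t)) atTop ((𝓝[>] 0) ×ˢ atTop) :=
    tendsto_inv_atTop_nhdsGT_zero.prodMk tendsto_id
  have h1 := (Frullani.tendsto_intervalIntegral auxF_loc one_pos (b := 3) (by norm_num)
    auxF_zero auxF_top).comp hp
  have h2 := (Frullani.tendsto_intervalIntegral auxF_loc (a := 3) (b := 5) (by norm_num)
    (by norm_num) auxF_zero auxF_top).comp hp
  have h3 := (h1.const_mul (10 / 16)).sub (h2.const_mul (125 / 16))
  have hc : AECover (volume.restrict (Ioi (0 : ℝ))) atTop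
      (fun t : ℝ => Ioi t⁻¹ ∩ Iic t) :=
    (aecover_Ioi_of_Ioi tendsto_inv_atTop_zero).inter (aecover_Iic tendsto_id)
  have h4 := hc.integral_tendsto_of_countably_generated aux_integrable
  have h5 := tendsto_nhds_unique (h4.congr' ?_) h3
  · rw [h5, Real.log_div (by norm_num) (by norm_num), Real.log_div (by norm_num) (by norm_num)]
    simp only [smul_eq_mul, Real.log_one]
    ring
  · filter_upwards [eventually_ge_atTop 1] with t ht
    have ht0 : 0 < t := by linarith
    have hi0 : 0 < t⁻¹ := inv_pos.2 ht0
    have hle : t⁻¹ ≤ t := (inv_le_one_of_one_le₀ ht).trans ht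
    have hI : ∀ a b : ℝ, 0 < a → 0 < b → IntervalIntegrable
        (fun x => x⁻¹ • (auxF (a * x) - auxF (b * x))) volume t⁻¹ t := by
      intro a b ha hb
      simp_rw [smul_sub]
      exact (Frullani.intervalIntegrable_inv_smul_comp_mul auxF_loc hi0 ht0 ha).sub
        (Frullani.intervalIntegrable_inv_smul_comp_mul auxF_loc hi0 ht0 hb)
    simp only [Function.comp]
    rw [← intervalIntegral.integral_const_mul, ← intervalIntegral.integral_const_mul,
      ← intervalIntegral.integral_sub ((hI 1 3 (by norm_num) (by norm_num)).const_mul _)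
        ((hI 3 5 (by norm_num) (by norm_num)).const_mul _),
      intervalIntegral.integral_of_le hle,
      Measure.restrict_restrict (measurableSet_Ioi.inter measurableSet_Iic), Ioi_inter_Iic,
      inter_eq_left.2 (show Ioc t⁻¹ t ⊆ Ioi 0 from fun x hx => hi0.trans hx.1)]
    refine setIntegral_congr_fun measurableSet_Ioc fun x hx => ?_
    exact aux_decomp x (hi0.trans hx.1)
end

section
/- The function x ↦ sin⁶(x)/x⁶ is Lebesgue integrable on ℝ and ∫_ℝ sin⁶(x)/x⁶ dx = (11/20)·π. -/
open MeasureTheory Real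

/-- Antiderivative of `exp (-t x) * cos (a x)`. -/
noncomputable def lapG (t a x : ℝ) : ℝ :=
  Real.exp (-(t * x)) * ((a * Real.sin (a * x) - t * Real.cos (a * x)) / (t ^ 2 + a ^ 2))

lemma lapG_deriv {t : ℝ} (ht : 0 < t) (a x : ℝ) :
    HasDerivAt (lapG t a) (Real.exp (-(t * x)) * Real.cos (a * x)) x := by
  have hne : t ^ 2 + a ^ 2 ≠ 0 := by positivity
  have hl : ∀ c : ℝ, HasDerivAt (fun x : ℝ => c * x) c x := fun c => by
    simpa using (hasDerivAt_id x).const_mul c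
  have h1 : HasDerivAt (fun x : ℝ => Real.exp (-(t * x))) (Real.exp (-(t * x)) * -t) x :=
    (hl t).neg.exp
  have h2 := ((((hl a).sin.const_mul a).sub ((hl a).cos.const_mul t)).div_const (t ^ 2 + a ^ 2))
  refine (h1.mul h2).congr_deriv ?_
  simp only [Pi.sub_apply]
  field_simp
  ring

lemma lapG_lim {t : ℝ} (ht : 0 < t) (a : ℝ) :
    Filter.Tendsto (lapG t a) Filter.atTop (nhds 0) := by
  have h0 : Filter.Tendsto (fun x : ℝ => Real.exp (-(t * x))) Filter.atTop (nhds 0) :=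
    Real.tendsto_exp_neg_atTop_nhds_zero.comp (Filter.tendsto_id.const_mul_atTop ht)
  have hp : 0 < t ^ 2 + a ^ 2 := by positivity
  refine h0.zero_mul_isBoundedUnder_le ?_
  refine Filter.isBoundedUnder_of ⟨(|a| + t) / (t ^ 2 + a ^ 2), fun x => ?_⟩
  simp only [Function.comp_apply, Real.norm_eq_abs]
  rw [abs_div, abs_of_pos hp]
  gcongr
  refine (abs_sub _ _).trans ?_
  rw [abs_mul, abs_mul, abs_of_pos ht]
  have := Real.abs_sin_le_one (a * x)
  have := Real.abs_cos_le_one (a * x)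
  gcongr
  · nlinarith [abs_nonneg a]
  · nlinarith

lemma sin_six (x : ℝ) : Real.sin x ^ 6 =
    (10 * Real.cos (0 * x) - 15 * Real.cos (2 * x) + 6 * Real.cos (4 * x) - Real.cos (6 * x)) / 32 := by
  have h4 : Real.cos (4 * x) = 2 * Real.cos (2 * x) ^ 2 - 1 := by
    rw [← Real.cos_two_mul]; ring_nf
  have h6 : Real.cos (6 * x) = 4 * Real.cos (2 * x) ^ 3 - 3 * Real.cos (2 * x) := by
    rw [← Real.cos_three_mul]; ring_nf
  have h2 : Real.cos (2 * x) = 1 - 2 * Real.sin x ^ 2 := by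
    rw [Real.cos_two_mul, Real.cos_sq']; ring
  rw [h4, h6, h2]; simp; ring

lemma lap_sin {t : ℝ} (ht : 0 < t) :
    IntegrableOn (fun x => Real.exp (-(t * x)) * Real.sin x ^ 6) (Set.Ioi 0) ∧
    ∫ x in Set.Ioi (0:ℝ), Real.exp (-(t * x)) * Real.sin x ^ 6 =
      720 / (t * (t ^ 2 + 4) * (t ^ 2 + 16) * (t ^ 2 + 36)) := by
  let g : ℝ → ℝ := fun x => (10 * lapG t 0 x - 15 * lapG t 2 x + 6 * lapG t 4 x - lapG t 6 x) / 32
  have hd : ∀ x ∈ Set.Ici (0:ℝ), HasDerivAt g (Real.exp (-(t * x)) * Real.sin x ^ 6) x := by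
    intro x _
    refine ((((((lapG_deriv ht 0 x).const_mul 10).sub ((lapG_deriv ht 2 x).const_mul 15)).add
      ((lapG_deriv ht 4 x).const_mul 6)).sub (lapG_deriv ht 6 x)).div_const 32).congr_deriv ?_
    rw [sin_six]; ring
  have hl : Filter.Tendsto g Filter.atTop (nhds 0) := by
    have := ((((((lapG_lim ht 0).const_mul 10).sub ((lapG_lim ht 2).const_mul 15)).add
      ((lapG_lim ht 4).const_mul 6)).sub (lapG_lim ht 6)).div_const 32)
    simpa using this
  have hn : ∀ x ∈ Set.Ioi (0:ℝ), 0 ≤ Real.exp (-(t * x)) * Real.sin x ^ 6 := by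
    intro x _
    have : 0 ≤ Real.sin x ^ 6 := Even.pow_nonneg (by decide) _
    positivity
  refine ⟨integrableOn_Ioi_deriv_of_nonneg' hd hn hl, ?_⟩
  rw [integral_Ioi_of_hasDerivAt_of_nonneg' hd hn hl]
  simp only [g, lapG]
  simp
  field_simp
  ring

lemma rat_int :
    IntegrableOn (fun t : ℝ => 6 * t ^ 4 / ((t ^ 2 + 4) * (t ^ 2 + 16) * (t ^ 2 + 36))) (Set.Ioi 0) ∧
    ∫ t in Set.Ioi (0:ℝ), 6 * t ^ 4 / ((t ^ 2 + 4) * (t ^ 2 + 16) * (t ^ 2 + 36)) =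
      11 / 40 * Real.pi := by
  let g : ℝ → ℝ := fun t => 1 / 8 * Real.arctan (1 / 2 * t) - 8 / 5 * Real.arctan (1 / 4 * t)
    + 81 / 40 * Real.arctan (1 / 6 * t)
  have hd : ∀ t ∈ Set.Ici (0:ℝ), HasDerivAt g
      (6 * t ^ 4 / ((t ^ 2 + 4) * (t ^ 2 + 16) * (t ^ 2 + 36))) t := by
    intro t _
    have hl : ∀ c : ℝ, HasDerivAt (fun x : ℝ => c * x) c t := fun c => by
      simpa using (hasDerivAt_id t).const_mul c
    refine ((((hl (1/2)).arctan.const_mul (1/8)).sub ((hl (1/4)).arctan.const_mul (8/5))).add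
      ((hl (1/6)).arctan.const_mul (81/40))).congr_deriv ?_
    have h1 : 1 + (1 / 2 * t) ^ 2 = (t ^ 2 + 4) / 4 := by ring
    have h2 : 1 + (1 / 4 * t) ^ 2 = (t ^ 2 + 16) / 16 := by ring
    have h3 : 1 + (1 / 6 * t) ^ 2 = (t ^ 2 + 36) / 36 := by ring
    rw [h1, h2, h3]
    field_simp
    ring
  have hl : Filter.Tendsto g Filter.atTop (nhds (11 / 40 * Real.pi)) := by
    have ha : ∀ c : ℝ, 0 < c → Filter.Tendsto (fun t : ℝ => Real.arctan (c * t)) Filter.atTop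
        (nhds (Real.pi / 2)) := fun c hc =>
      (Real.tendsto_arctan_atTop.mono_right nhdsWithin_le_nhds).comp
        (Filter.tendsto_id.const_mul_atTop hc)
    have := (((ha (1/2) (by norm_num)).const_mul (1/8)).sub
      ((ha (1/4) (by norm_num)).const_mul (8/5))).add ((ha (1/6) (by norm_num)).const_mul (81/40))
    convert this using 2
    ring
  have hn : ∀ t ∈ Set.Ioi (0:ℝ),
      0 ≤ 6 * t ^ 4 / ((t ^ 2 + 4) * (t ^ 2 + 16) * (t ^ 2 + 36)) := by
    intro t _
    positivity
  refine ⟨integrableOn_Ioi_deriv_of_nonneg' hd hn hl, ?_⟩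
  rw [integral_Ioi_of_hasDerivAt_of_nonneg' hd hn hl]
  simp [g]

lemma gamma_int {x : ℝ} (hx : 0 < x) :
    ∫ t in Set.Ioi (0:ℝ), t ^ 5 / 120 * (Real.exp (-(t * x)) * Real.sin x ^ 6) =
      Real.sin x ^ 6 / x ^ 6 := by
  have h := Real.integral_rpow_mul_exp_neg_mul_Ioi (a := 6) (r := x) (by norm_num) hx
  have hG : Real.Gamma 6 = 120 := by
    have h6 : (6:ℝ) = ((5:ℕ):ℝ) + 1 := by norm_num
    rw [h6, Real.Gamma_nat_eq_factorial 5]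
    norm_num [Nat.factorial]
  have e : ∀ t : ℝ, t ^ 5 / 120 * (Real.exp (-(t * x)) * Real.sin x ^ 6) =
      (Real.sin x ^ 6 / 120) * (t ^ ((6:ℝ) - 1) * Real.exp (-(x * t))) := by
    intro t
    have : t ^ ((6:ℝ) - 1) = t ^ 5 := by
      rw [← Real.rpow_natCast]; norm_num
    rw [this, mul_comm x t]; ring
  simp_rw [e]
  rw [integral_const_mul, h, hG]
  have : (1 / x) ^ (6:ℝ) = (1 / x) ^ 6 := by
    rw [← Real.rpow_natCast]; norm_num
  rw [this]
  field_simp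

lemma half_line :
    IntegrableOn (fun x : ℝ => Real.sin x ^ 6 / x ^ 6) (Set.Ioi 0) ∧
    ∫ x in Set.Ioi (0:ℝ), Real.sin x ^ 6 / x ^ 6 = 11 / 40 * Real.pi := by
  let F : ℝ → ℝ → ℝ := fun x t => t ^ 5 / 120 * (Real.exp (-(t * x)) * Real.sin x ^ 6)
  let μ : Measure ℝ := volume.restrict (Set.Ioi 0)
  have hin : ∀ t : ℝ, 0 < t → ∫ x, F x t ∂μ =
      6 * t ^ 4 / ((t ^ 2 + 4) * (t ^ 2 + 16) * (t ^ 2 + 36)) := by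
    intro t ht
    simp only [F, μ]
    rw [integral_const_mul, (lap_sin ht).2]
    field_simp
    norm_num
  have hint : Integrable (Function.uncurry F) (μ.prod μ) := by
    rw [integrable_prod_iff']
    · constructor
      · filter_upwards [ae_restrict_mem measurableSet_Ioi] with t ht
        exact (lap_sin ht).1.const_mul (t ^ 5 / 120)
      · refine rat_int.1.congr ?_
        filter_upwards [ae_restrict_mem measurableSet_Ioi] with t ht
        have ht : 0 < t := ht
        rw [← hin t ht]
        refine integral_congr_ae (Filter.Eventually.of_forall fun x => ?_)
        have : 0 ≤ Real.sin x ^ 6 := Even.pow_nonneg (by decide) _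
        have h : 0 ≤ F x t := by simp only [F]; positivity
        exact (Real.norm_of_nonneg h).symm
    · have : Continuous (Function.uncurry F) := by
        simp only [F, Function.uncurry_def]; fun_prop
      exact this.aestronglyMeasurable
  have hout : ∀ᵐ x ∂μ, ∫ t, F x t ∂μ = Real.sin x ^ 6 / x ^ 6 := by
    filter_upwards [ae_restrict_mem measurableSet_Ioi] with x hx
    exact gamma_int hx
  refine ⟨hint.integral_prod_left.congr hout, ?_⟩
  have h1 := integral_integral_swap hint
  rw [integral_congr_ae hout] at h1
  refine h1.trans (Eq.trans ?_ rat_int.2)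
  refine integral_congr_ae ?_
  filter_upwards [ae_restrict_mem measurableSet_Ioi] with t ht
  exact hin t ht

theorem stmt_19 :
    Integrable (fun x : ℝ => Real.sin x ^ 6 / x ^ 6) ∧
    ∫ x : ℝ, Real.sin x ^ 6 / x ^ 6 = 11 / 20 * Real.pi := by
  constructor
  · have h2 : IntegrableOn (fun x : ℝ => Real.sin x ^ 6 / x ^ 6) (Set.Iic 0) := by
      have h := IntegrableOn.comp_neg_Iic (c := (0:ℝ)) (μ := volume)
        (f := fun x : ℝ => Real.sin x ^ 6 / x ^ 6)
        (by rw [neg_zero, integrableOn_Ici_iff_integrableOn_Ioi]; exact half_line.1)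
      refine h.congr_fun (fun x _ => ?_) measurableSet_Iic
      simp only [Real.sin_neg]
      rw [Even.neg_pow (by decide), Even.neg_pow (by decide)]
    rw [← integrableOn_univ, ← Set.Iic_union_Ioi (a := (0:ℝ))]
    exact h2.union half_line.1
  · have h := integral_comp_abs (f := fun x : ℝ => Real.sin x ^ 6 / x ^ 6)
    rw [half_line.2] at h
    have e : ∀ x : ℝ, Real.sin |x| ^ 6 / |x| ^ 6 = Real.sin x ^ 6 / x ^ 6 := by
      intro x
      rcases abs_choice x with h | h <;> rw [h]
      rw [Real.sin_neg, Even.neg_pow (by decide), Even.neg_pow (by decide)]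
    simp only [e] at h
    rw [h]; ring
end
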